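/- Second-moment tensor structure (part of Theorem 1): under the multi-view latent class model with full-column-rank conditional mean matrices θ₁,θ₂,θ₃ and positive class probabilities p₁,…,p_L, the transformed variable R²′ := E[R¹⊗R³]·E[R²⊗R³]⁺·R² satisfies E[R²′ | z=i] = θ_{1,i}, and consequently M₂ := E[R¹ ⊗ R²′] = ∑_{i=1}^L p_i θ_{1,i} ⊗ θ_{1,i}. -/

import Mathlib

open MeasureTheory

/-!
Conditional uncorrelatedness given `z` factors the cross moments as `A₁₃ = θ₁ C` and `A₂₃ = θ₂ C`,
where `C = diag(p) θ₃ᵀ`. As `θ₂` cancels on the left and `C` on the right, `A₂₃ P A₂₃ = A₂₃` forces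
`C P θ₂ = 1`, so that `T = A₁₃ P` satisfies `T θ₂ = θ₁ C P θ₂ = θ₁`. Hence `T R²` has class means
`θ₁`, and as it is still uncorrelated with `R¹` within each class, the factorization applies to the
pair `R¹`, `T R²`.
-/

section InnerInverse

open Matrix

theorem mul_innerInverse_mul_eq_one {R m n k : Type*} [Semiring R] [Fintype m] [Fintype n]
    [Fintype k] [DecidableEq n] {B : Matrix m n R} {C : Matrix n k R} {P : Matrix k m R}
    (hB : B.mulVec.Injective) (hC : C.vecMul.Injective) (hP : B * C * P * (B * C) = B * C) :
    C * P * B = 1 := by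
  have hBC : B * (C * P * B * C) = B * C := by simpa only [Matrix.mul_assoc] using hP
  have hPC : C * P * B * C = (1 : Matrix n n R) * C :=
    (ext_col fun j => hB congr(($hBC).col j)).trans (Matrix.one_mul C).symm
  exact ext_row fun i => hC congr(($hPC).row i)

theorem vecMul_injective_diagonal_mul_transpose {R m n : Type*} [CommSemiring R]
    [IsCancelMulZero R] [Fintype n] [DecidableEq n] {d : n → R} {A : Matrix m n R}
    (hd : ∀ i, d i ≠ 0) (hA : LinearIndependent R A.col) : (diagonal d * Aᵀ).vecMul.Injective := by
  intro v w hvw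
  have hdiag : v ᵥ* diagonal d = w ᵥ* diagonal d :=
    vecMul_injective_iff.mpr hA (by simpa only [vecMul_vecMul] using hvw)
  ext i
  simpa only [vecMul_diagonal, mul_left_inj' (hd i)] using congrFun hdiag i

end InnerInverse

theorem integral_eq_sum_setIntegral_fiber {Ω ι E : Type*} [MeasurableSpace Ω] [Fintype ι]
    [MeasurableSpace ι] [MeasurableSingletonClass ι] [NormedAddCommGroup E] [NormedSpace ℝ E]
    {μ : Measure Ω} {z : Ω → ι} (hz : Measurable z) {f : Ω → E} (hf : Integrable f μ) :
    ∫ ω, f ω ∂μ = ∑ i, ∫ ω in z ⁻¹' {i}, f ω ∂μ := by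
  have hcover : ⋃ i, z ⁻¹' {i} = Set.univ := Set.iUnion_eq_univ_iff.mpr fun ω => ⟨z ω, rfl⟩
  rw [← setIntegral_univ, ← hcover]
  exact integral_iUnion_fintype (fun i => hz (measurableSet_singleton i))
    (pairwise_disjoint_fiber z) fun i => hf.integrableOn

section LatentClass

open Matrix

variable {Ω ι l m n 𝕜 : Type*} [MeasurableSpace Ω] [RCLike 𝕜]

/-- The probability `P(z = i)` of the latent class `i`. -/
noncomputable def classProb (μ : Measure Ω) (z : Ω → ι) (i : ι) : ℝ :=
  μ.real (z ⁻¹' {i})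

/-- The cross-moment matrix `E[X ⊗ Y] = E[X Yᵀ]` of two random vectors; no conjugation is applied
in the complex case. -/
noncomputable def crossMoment (μ : Measure Ω) (X : Ω → m → 𝕜) (Y : Ω → n → 𝕜) : Matrix m n 𝕜 :=
  of fun a b => ∫ ω, X ω a * Y ω b ∂μ

/-- `θ` is the conditional mean matrix of `X`: its `i`-th column is `E[X | z = i]`. The mean is
multiplied out by the class probability, so null classes leave their column unconstrained. -/
structure IsClassMean (μ : Measure Ω) (z : Ω → ι) (X : Ω → m → 𝕜) (θ : Matrix m ι 𝕜) : Prop where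
  integrable : ∀ a, Integrable (fun ω => X ω a) μ
  setIntegral_eq : ∀ i a, ∫ ω in z ⁻¹' {i}, X ω a ∂μ = classProb μ z i • θ a i

/-- `X` and `Y` are uncorrelated given `z`: `E[X Yᵀ | z = i] = E[X | z = i] E[Y | z = i]ᵀ`,
multiplied out by the square of the class probability. This is all that the second moments see of
conditional independence. -/
structure IsClassUncorrelated (μ : Measure Ω) (z : Ω → ι) (X : Ω → m → 𝕜) (Y : Ω → n → 𝕜) :
    Prop where
  integrable_mul : ∀ a b, Integrable (fun ω => X ω a * Y ω b) μ
  setIntegral_mul : ∀ i a b, classProb μ z i • ∫ ω in z ⁻¹' {i}, X ω a * Y ω b ∂μ =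
    (∫ ω in z ⁻¹' {i}, X ω a ∂μ) * ∫ ω in z ⁻¹' {i}, Y ω b ∂μ

variable {μ : Measure Ω} {z : Ω → ι} {X : Ω → m → 𝕜} {Y : Ω → n → 𝕜}

theorem integral_mulVec_apply [Fintype n] (A : Matrix m n 𝕜)
    (hY : ∀ b, Integrable (fun ω => Y ω b) μ) (a : m) :
    ∫ ω, (A *ᵥ Y ω) a ∂μ = ∑ b, A a b * ∫ ω, Y ω b ∂μ := by
  simp only [mulVec, dotProduct]
  rw [integral_finsetSum _ fun b _ => (hY b).const_mul _]
  simp only [integral_const_mul]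

theorem IsClassMean.mulVec [Fintype n] {θ : Matrix n ι 𝕜} (h : IsClassMean μ z Y θ)
    (A : Matrix m n 𝕜) : IsClassMean μ z (fun ω => A *ᵥ Y ω) (A * θ) where
  integrable a := integrable_finsetSum _ fun b _ => (h.integrable b).const_mul (A a b)
  setIntegral_eq i a := by
    rw [integral_mulVec_apply A fun b => (h.integrable b).integrableOn]
    simp only [h.setIntegral_eq, mul_apply, Finset.smul_sum, mul_smul_comm]

theorem IsClassUncorrelated.mulVec_right [Fintype n] (h : IsClassUncorrelated μ z X Y)
    (hY : ∀ b, Integrable (fun ω => Y ω b) μ) (A : Matrix l n 𝕜) :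
    IsClassUncorrelated μ z X fun ω => A *ᵥ Y ω := by
  have mul_mulVec (a c) (ω : Ω) : X ω a * (A *ᵥ Y ω) c = (A *ᵥ fun b => X ω a * Y ω b) c :=
    congrFun (mulVec_smul A (X ω a) (Y ω)).symm c
  constructor
  · intro a c
    simp only [mul_mulVec]
    exact integrable_finsetSum _ fun b _ => (h.integrable_mul a b).const_mul (A c b)
  · intro i a c
    simp only [mul_mulVec]
    rw [integral_mulVec_apply A fun b => (h.integrable_mul a b).integrableOn,
      integral_mulVec_apply A fun b => (hY b).integrableOn]
    simp only [Finset.smul_sum, Finset.mul_sum, ← mul_smul_comm, h.setIntegral_mul, mul_left_comm]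

variable [MeasurableSpace ι] [MeasurableSingletonClass ι]
  {θ : Matrix m ι 𝕜} {φ : Matrix n ι 𝕜}

theorem crossMoment_apply_eq_sum [Fintype ι] (hz : Measurable z)
    (hp : ∀ i, classProb μ z i ≠ 0) (hX : IsClassMean μ z X θ) (hY : IsClassMean μ z Y φ)
    (hXY : IsClassUncorrelated μ z X Y) (a : m) (b : n) :
    crossMoment μ X Y a b = ∑ i, classProb μ z i • θ a i * φ b i := by
  rw [crossMoment, of_apply, integral_eq_sum_setIntegral_fiber hz (hXY.integrable_mul a b)]
  refine Finset.sum_congr rfl fun i _ => smul_right_injective 𝕜 (hp i) ?_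
  simp only [hXY.setIntegral_mul, hX.setIntegral_eq, hY.setIntegral_eq, mul_smul_comm]

theorem crossMoment_eq_mul_diagonal_mul_transpose [Fintype ι] [DecidableEq ι] (hz : Measurable z)
    (hp : ∀ i, classProb μ z i ≠ 0) (hX : IsClassMean μ z X θ) (hY : IsClassMean μ z Y φ)
    (hXY : IsClassUncorrelated μ z X Y) :
    crossMoment μ X Y = θ * (diagonal (fun i => (classProb μ z i : 𝕜)) * φᵀ) := by
  ext a b
  rw [crossMoment_apply_eq_sum hz hp hX hY hXY, mul_apply]
  simp only [diagonal_mul, transpose_apply, RCLike.real_smul_eq_coe_mul, mul_assoc, mul_left_comm]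

variable {J₁ J₂ J₃ : Type*} [Fintype J₂] [Fintype J₃] {R₁ : Ω → J₁ → 𝕜} {R₂ : Ω → J₂ → 𝕜}
  {R₃ : Ω → J₃ → 𝕜} {θ₁ : Matrix J₁ ι 𝕜} {θ₂ : Matrix J₂ ι 𝕜} {θ₃ : Matrix J₃ ι 𝕜}
  {P : Matrix J₃ J₂ 𝕜}

theorem crossMoment_mul_innerInverse_mul_classMean [Finite ι] (hz : Measurable z)
    (hp : ∀ i, classProb μ z i ≠ 0) (h₁ : IsClassMean μ z R₁ θ₁) (h₂ : IsClassMean μ z R₂ θ₂)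
    (h₃ : IsClassMean μ z R₃ θ₃) (h₁₃ : IsClassUncorrelated μ z R₁ R₃)
    (h₂₃ : IsClassUncorrelated μ z R₂ R₃) (hθ₂ : LinearIndependent 𝕜 θ₂.col)
    (hθ₃ : LinearIndependent 𝕜 θ₃.col)
    (hP : crossMoment μ R₂ R₃ * P * crossMoment μ R₂ R₃ = crossMoment μ R₂ R₃) :
    crossMoment μ R₁ R₃ * P * θ₂ = θ₁ := by
  classical
  cases nonempty_fintype ι
  rw [crossMoment_eq_mul_diagonal_mul_transpose hz hp h₂ h₃ h₂₃] at hP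
  have hC : diagonal (fun i => (classProb μ z i : 𝕜)) * θ₃ᵀ * P * θ₂ = 1 :=
    mul_innerInverse_mul_eq_one (mulVec_injective_iff.mpr hθ₂)
      (vecMul_injective_diagonal_mul_transpose (by simpa using hp) hθ₃) hP
  rw [crossMoment_eq_mul_diagonal_mul_transpose hz hp h₁ h₃ h₁₃, Matrix.mul_assoc θ₁,
    Matrix.mul_assoc θ₁, hC, Matrix.mul_one]

theorem second_moment_tensor_structure_general [Fintype ι] (hz : Measurable z)
    (hp : ∀ i, classProb μ z i ≠ 0) (h₁ : IsClassMean μ z R₁ θ₁) (h₂ : IsClassMean μ z R₂ θ₂)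
    (h₃ : IsClassMean μ z R₃ θ₃) (h₁₂ : IsClassUncorrelated μ z R₁ R₂)
    (h₁₃ : IsClassUncorrelated μ z R₁ R₃) (h₂₃ : IsClassUncorrelated μ z R₂ R₃)
    (hθ₂ : LinearIndependent 𝕜 θ₂.col) (hθ₃ : LinearIndependent 𝕜 θ₃.col)
    (hP : crossMoment μ R₂ R₃ * P * crossMoment μ R₂ R₃ = crossMoment μ R₂ R₃) :
    IsClassMean μ z (fun ω => (crossMoment μ R₁ R₃ * P) *ᵥ R₂ ω) θ₁ ∧
      ∀ a a', crossMoment μ R₁ (fun ω => (crossMoment μ R₁ R₃ * P) *ᵥ R₂ ω) a a' =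
        ∑ i, classProb μ z i • θ₁ a i * θ₁ a' i := by
  have hT : crossMoment μ R₁ R₃ * P * θ₂ = θ₁ :=
    crossMoment_mul_innerInverse_mul_classMean hz hp h₁ h₂ h₃ h₁₃ h₂₃ hθ₂ hθ₃ hP
  have hmean : IsClassMean μ z (fun ω => (crossMoment μ R₁ R₃ * P) *ᵥ R₂ ω) θ₁ := by
    simpa only [hT] using h₂.mulVec (crossMoment μ R₁ R₃ * P)
  exact ⟨hmean, crossMoment_apply_eq_sum hz hp h₁ hmean (h₁₂.mulVec_right h₂.integrable _)⟩

end LatentClass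

/-- Second-moment tensor structure (part of Theorem 1): under the multi-view
latent class model with full-column-rank conditional mean matrices
`θ₁, θ₂, θ₃` and positive class probabilities `p₁,…,p_L`, the transformed
variable `R²′ := E[R¹⊗R³] · E[R²⊗R³]⁺ · R²` satisfies
`E[R²′ | z = i] = θ_{1,i}` (equivalently, `∫_{z=i} R²′ = pᵢ θ_{1,i}`), and
consequently `M₂ := E[R¹ ⊗ R²′] = ∑ᵢ pᵢ θ_{1,i} ⊗ θ_{1,i}`.
The Moore–Penrose pseudoinverse `Pinv` of `A23 = E[R²⊗R³]` is characterized by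
the four Penrose conditions. -/
theorem second_moment_tensor_structure {Ω : Type*} [MeasurableSpace Ω]
    (μ : Measure Ω) [IsProbabilityMeasure μ]
    (L J1 J2 J3 : ℕ) (z : Ω → Fin L) (hz : Measurable z)
    (R1 : Ω → Fin J1 → ℝ) (R2 : Ω → Fin J2 → ℝ) (R3 : Ω → Fin J3 → ℝ)
    (p : Fin L → ℝ) (hppos : ∀ i, 0 < p i)
    (θ1 : Matrix (Fin J1) (Fin L) ℝ) (θ2 : Matrix (Fin J2) (Fin L) ℝ)
    (θ3 : Matrix (Fin J3) (Fin L) ℝ)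
    -- full column rank of each θ_t (linearly independent columns):
    (hrank1 : LinearIndependent ℝ θ1.transpose)
    (hrank2 : LinearIndependent ℝ θ2.transpose)
    (hrank3 : LinearIndependent ℝ θ3.transpose)
    -- integrability:
    (hint1 : ∀ a, Integrable (fun ω => R1 ω a) μ)
    (hint2 : ∀ b, Integrable (fun ω => R2 ω b) μ)
    (hint3 : ∀ c, Integrable (fun ω => R3 ω c) μ)
    (hint12 : ∀ a b, Integrable (fun ω => R1 ω a * R2 ω b) μ)
    (hint13 : ∀ a c, Integrable (fun ω => R1 ω a * R3 ω c) μ)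
    (hint23 : ∀ b c, Integrable (fun ω => R2 ω b * R3 ω c) μ)
    -- class probabilities and conditional means:
    (hp : ∀ i, (μ {ω | z ω = i}).toReal = p i)
    (hmean1 : ∀ i a, (∫ ω in {ω | z ω = i}, R1 ω a ∂μ) = p i * θ1 a i)
    (hmean2 : ∀ i b, (∫ ω in {ω | z ω = i}, R2 ω b ∂μ) = p i * θ2 b i)
    (hmean3 : ∀ i c, (∫ ω in {ω | z ω = i}, R3 ω c ∂μ) = p i * θ3 c i)
    -- pairwise conditional independence given z:
    (hCI12 : ∀ i a b,
      p i * (∫ ω in {ω | z ω = i}, R1 ω a * R2 ω b ∂μ) =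
        (∫ ω in {ω | z ω = i}, R1 ω a ∂μ) * (∫ ω in {ω | z ω = i}, R2 ω b ∂μ))
    (hCI13 : ∀ i a c,
      p i * (∫ ω in {ω | z ω = i}, R1 ω a * R3 ω c ∂μ) =
        (∫ ω in {ω | z ω = i}, R1 ω a ∂μ) * (∫ ω in {ω | z ω = i}, R3 ω c ∂μ))
    (hCI23 : ∀ i b c,
      p i * (∫ ω in {ω | z ω = i}, R2 ω b * R3 ω c ∂μ) =
        (∫ ω in {ω | z ω = i}, R2 ω b ∂μ) * (∫ ω in {ω | z ω = i}, R3 ω c ∂μ))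
    -- the cross-moment matrices A13 = E[R¹⊗R³], A23 = E[R²⊗R³]:
    (A13 : Matrix (Fin J1) (Fin J3) ℝ)
    (hA13 : ∀ a c, A13 a c = ∫ ω, R1 ω a * R3 ω c ∂μ)
    (A23 : Matrix (Fin J2) (Fin J3) ℝ)
    (hA23 : ∀ b c, A23 b c = ∫ ω, R2 ω b * R3 ω c ∂μ)
    -- Pinv is the Moore–Penrose pseudoinverse of A23:
    (Pinv : Matrix (Fin J3) (Fin J2) ℝ)
    (hMP1 : A23 * Pinv * A23 = A23)
    (hMP2 : Pinv * A23 * Pinv = Pinv)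
    (hMP3 : (A23 * Pinv).transpose = A23 * Pinv)
    (hMP4 : (Pinv * A23).transpose = Pinv * A23)
    -- the transformed response R²′ = (A13 · Pinv) R²:
    (R2' : Ω → Fin J1 → ℝ)
    (hR2' : ∀ ω a, R2' ω a = ∑ b, (A13 * Pinv) a b * R2 ω b) :
    (∀ i a, (∫ ω in {ω | z ω = i}, R2' ω a ∂μ) = p i * θ1 a i) ∧
      (∀ a a', (∫ ω, R1 ω a * R2' ω a' ∂μ) = ∑ i, p i * θ1 a i * θ1 a' i) := by
  obtain ⟨rfl, rfl, rfl, rfl⟩ : classProb μ z = p ∧ A13 = crossMoment μ R1 R3 ∧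
      A23 = crossMoment μ R2 R3 ∧ R2' = fun ω => (A13 * Pinv).mulVec (R2 ω) :=
    ⟨funext hp, Matrix.ext hA13, Matrix.ext hA23, funext₂ hR2'⟩
  exact (second_moment_tensor_structure_general hz (fun i => (hppos i).ne') ⟨hint1, hmean1⟩
    ⟨hint2, hmean2⟩ ⟨hint3, hmean3⟩ ⟨hint12, hCI12⟩ ⟨hint13, hCI13⟩ ⟨hint23, hCI23⟩
    hrank2 hrank3 hMP1).imp_left IsClassMean.setIntegral_eq
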